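/- Let r, d ≥ 1 be integers, (n_k)_{k≥1} a Hadamard lacunary sequence, and φ = ∑_{i=1}^r φ_i ∈ H²(𝔻, ℂ^d), where σ(φ_i) ⊆ {n_k + i − 1 : k ≥ 1} for i = 1, …, r. Suppose that for every m ≥ 1 the linear span in (ℂ^d)^r ≅ ℂ^{dr} of the vectors (φ̂_1(n_k), φ̂_2(n_k + 1), …, φ̂_r(n_k + r − 1)) over all k ≥ m equals ℂ^{dr}. Then φ is cyclic for the backward shift on H²(𝔻, ℂ^d). -/

import Mathlib

open scoped InnerProductSpace ENNReal
noncomputable section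

/-- The Hardy space `H²(𝔻, X)` identified with `ℓ²(ℕ, X)`. -/
abbrev H2 (X : Type*) [NormedAddCommGroup X] [InnerProductSpace ℂ X] : Type _ :=
  lp (fun _ : ℕ => X) 2

variable {X : Type*} [NormedAddCommGroup X] [InnerProductSpace ℂ X]

/-- The backward shift `S*` on `H²(𝔻, X)`. -/
def bshift (f : H2 X) : H2 X :=
  ⟨fun n => f (n + 1), by
    have h : Summable fun n : ℕ => ‖f n‖ ^ (2 : ℝ≥0∞).toReal :=
      (memℓp_gen_iff (by norm_num)).1 (lp.memℓp f)
    exact memℓp_gen ((summable_nat_add_iff 1).2 h)⟩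

/-- `E_F`: the smallest closed `S*`-invariant subspace containing the family `F`. -/
def EF (F : Set (H2 X)) : Submodule ℂ (H2 X) :=
  (Submodule.span ℂ {g : H2 X | ∃ f ∈ F, ∃ n : ℕ, g = bshift^[n] f}).topologicalClosure

/-- `E_f` for a single function. -/
def Ef (f : H2 X) : Submodule ℂ (H2 X) :=
  EF {f}

/-- `X_*(F) = ⋂_m closed-span {f̂(k) : k ≥ m, f ∈ F}`. -/
def XstarF (F : Set (H2 X)) : Submodule ℂ X :=
  ⨅ m : ℕ, (Submodule.span ℂ {x : X | ∃ f ∈ F, ∃ k ≥ m, x = f k}).topologicalClosure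

def Xstar (f : H2 X) : Submodule ℂ X := XstarF {f}

/-- `P : X → X` is an orthogonal projection: idempotent and self-adjoint. -/
def IsOrthoProj {Y : Type*} [NormedAddCommGroup Y] [InnerProductSpace ℂ Y]
    (P : Y →L[ℂ] Y) : Prop :=
  (∀ x, P (P x) = P x) ∧ ∀ x y, ⟪P x, y⟫_ℂ = ⟪x, P y⟫_ℂ

/-- A sequence in a Hilbert space is completely relatively compact if for every orthogonal
projection `P` the normalized sequence `{P aₖ / ‖P aₖ‖ : P aₖ ≠ 0}` is relatively compact. -/
def CRC {Y : Type*} [NormedAddCommGroup Y] [InnerProductSpace ℂ Y] (a : ℕ → Y) : Prop :=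
  ∀ P : Y →L[ℂ] Y, IsOrthoProj P →
    IsCompact (closure {v : Y | ∃ k, P (a k) ≠ 0 ∧ v = ‖P (a k)‖⁻¹ • P (a k)})

/-- A subset of `ℕ` is Hadamard lacunary. -/
def HadLac (Λ : Set ℕ) : Prop :=
  ∃ d : ℝ, 1 < d ∧ ∀ m ∈ Λ, ∀ n ∈ Λ, m < n → d * m ≤ n

/-- The Fourier spectrum. -/
def spec (f : H2 X) : Set ℕ := {k : ℕ | f k ≠ 0}

/-- `H²(𝔻, Y)` for a subspace `Y ⊆ X`, as a submodule of `H²(𝔻, X)`. -/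
def H2sub (Y : Submodule ℂ X) : Submodule ℂ (H2 X) where
  carrier := {g : H2 X | ∀ n, g n ∈ Y}
  add_mem' := by
    intro a b ha hb n
    have : (↑(a + b) : ∀ _ : ℕ, X) n = a n + b n := by
      rw [lp.coeFn_add]; rfl
    rw [this]
    exact Y.add_mem (ha n) (hb n)
  zero_mem' := by
    intro n
    have : (↑(0 : H2 X) : ∀ _ : ℕ, X) n = 0 := by rw [lp.coeFn_zero]; rfl
    rw [this]
    exact Y.zero_mem
  smul_mem' := by
    intro c a ha n
    have : (↑(c • a) : ∀ _ : ℕ, X) n = c • a n := by rw [lp.coeFn_smul]; rfl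
    rw [this]
    exact Y.smul_mem c (ha n)

/-- A polynomial: finitely many nonzero Taylor coefficients. -/
def PolyH2 (f : H2 X) : Prop := {n : ℕ | f n ≠ 0}.Finite



/-!
Let `g` be orthogonal to every `S*^q φ`, and put `Φ k = (φ̂ᵢ(n k + bᵢ))ᵢ` and
`G m = (ĝ(m + bᵢ))ᵢ`. Once the gaps of `n` before `n k` exceed `m + max bᵢ`, orthogonality to
`S*^(n k - m) φ` reads `∑_{j ≥ k} ⟪Φ j, G (n j - n k + m)⟫ = 0`. By finite-dimensionality the size
of a functional on all the `G m` is controlled by its values on finitely many of them, so `Φ j` may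
be measured by `A j = ∑_{l ∈ S} |⟪Φ j, G l⟫|²` with `S` finite. Isolating the term `j = k`,
Cauchy–Schwarz gives `A k ≤ (∑_{j > k} A j) * δ k`, where `δ` is summable because a lacunary
sequence represents every difference boundedly often. Summing over `k ≥ N` bounds the tail of `A` by
itself times the small tail of `δ`, so `A` vanishes eventually: every `G m` is orthogonal to all
late `Φ k`, and these span.
-/

open Filter

theorem summable_comp_of_encard_fiber_le {α β : Type*} {f : β → ℝ} (hf : Summable f)
    (hf0 : ∀ b, 0 ≤ f b) {e : α → β} {M : ℕ} (he : ∀ b, (e ⁻¹' {b}).encard ≤ M) :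
    Summable fun a => f (e a) := by
  have hfin (b : β) : Finite (e ⁻¹' {b}) := (Set.encard_le_coe_iff_finite_ncard_le.1 (he b)).1
  have hsum (b : β) : ∑' a : e ⁻¹' {b}, f (e a) = (e ⁻¹' {b}).ncard * f b := by
    have hconst (a : e ⁻¹' {b}) : f (e a) = f b := congrArg f a.2
    rw [tsum_congr hconst, tsum_const, nsmul_eq_mul, Nat.card_coe_set_eq]
  refine (summable_partition (s := fun b => e ⁻¹' {b}) (fun a => hf0 (e a))
    fun a => ⟨e a, rfl, fun _ h => Eq.symm h⟩).2 ⟨fun b => Summable.of_finite, ?_⟩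
  refine .of_nonneg_of_le (fun b => tsum_nonneg fun a => hf0 _) (fun b => ?_) (hf.mul_left (M : ℝ))
  rw [hsum]
  have hcard : (e ⁻¹' {b}).ncard ≤ M := (Set.encard_le_coe_iff_finite_ncard_le.1 (he b)).2
  exact mul_le_mul_of_nonneg_right (mod_cast hcard) (hf0 b)

theorem norm_sq_le_tsum_mul_tsum_of_hasSum {ι E : Type*} [SeminormedAddCommGroup E] {x : ι → E}
    {y : E} (hx : HasSum x y) {a b : ι → ℝ} (ha : Summable a) (hb : Summable b) (ha0 : ∀ i, 0 ≤ a i)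
    (hb0 : ∀ i, 0 ≤ b i) (hab : ∀ i, ‖x i‖ ^ 2 ≤ a i * b i) :
    ‖y‖ ^ 2 ≤ (∑' i, a i) * ∑' i, b i := by
  refine le_of_tendsto' (hx.norm.pow 2) fun t => ?_
  calc ‖∑ i ∈ t, x i‖ ^ 2 ≤ (∑ i ∈ t, ‖x i‖) ^ 2 := by gcongr; exact norm_sum_le _ _
    _ ≤ (∑ i ∈ t, a i) * ∑ i ∈ t, b i :=
        Finset.sum_sq_le_sum_mul_sum_of_sq_le_mul _ (fun i _ => ha0 i) (fun i _ => hb0 i)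
          fun i _ => hab i
    _ ≤ (∑' i, a i) * ∑' i, b i :=
        mul_le_mul (ha.sum_le_tsum _ fun i _ => ha0 i) (hb.sum_le_tsum _ fun i _ => hb0 i)
          (Finset.sum_nonneg fun i _ => hb0 i) (tsum_nonneg ha0)

theorem norm_sq_zero_le_tsum_mul_tsum_of_hasSum_zero {E : Type*} [SeminormedAddCommGroup E]
    {x : ℕ → E} (hx : HasSum x 0) {a b : ℕ → ℝ} (ha : Summable a) (hb : Summable b)
    (ha0 : ∀ s, 0 ≤ a s) (hb0 : ∀ s, 0 ≤ b s) (hab : ∀ s, ‖x (s + 1)‖ ^ 2 ≤ a s * b s) :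
    ‖x 0‖ ^ 2 ≤ (∑' s, a s) * ∑' s, b s := by
  have htail : HasSum (fun s => x (s + 1)) (-x 0) := by
    simpa only [Finset.sum_range_one, zero_sub] using (hasSum_nat_add_iff' 1).2 hx
  rw [← norm_neg]
  exact norm_sq_le_tsum_mul_tsum_of_hasSum htail ha hb ha0 hb0 hab

theorem eventually_eq_zero_of_le_tail_mul {A δ : ℕ → ℝ} (hA : Summable A) (hA0 : ∀ k, 0 ≤ A k)
    (hδ : Summable δ) (hδ0 : ∀ k, 0 ≤ δ k)
    (h : ∀ᶠ k in atTop, A k ≤ (∑' s, A (k + (s + 1))) * δ k) : ∀ᶠ k in atTop, A k = 0 := by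
  obtain ⟨N, hN, hδN⟩ := (eventually_forall_ge_atTop.2 h |>.and
    ((tendsto_sum_nat_add δ).eventually_lt_const one_pos)).exists
  set R := ∑' j, A (j + N)
  have hAN : Summable fun j => A (j + N) := (summable_nat_add_iff N).2 hA
  have htail (k : ℕ) : ∑' s, A (k + N + (s + 1)) ≤ R := by
    have hshift (s : ℕ) : A (k + N + (s + 1)) = A (s + (k + 1) + N) := by congr 1; omega
    rw [tsum_congr hshift]
    exact tsum_comp_le_tsum_of_inj hAN (fun j => hA0 _) (add_left_injective (k + 1))
  have hle : R ≤ R * ∑' k, δ (k + N) := by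
    rw [← tsum_mul_left]
    refine hAN.tsum_le_tsum (fun k => ?_) (((summable_nat_add_iff N).2 hδ).mul_left R)
    exact (hN _ (Nat.le_add_left N k)).trans (mul_le_mul_of_nonneg_right (htail k) (hδ0 _))
  have hR0 : R = 0 := by
    have : 0 ≤ R := tsum_nonneg fun j => hA0 _
    nlinarith
  filter_upwards [eventually_ge_atTop N] with k hk
  have hzero := congrFun
    ((hasSum_zero_iff_of_nonneg fun j => hA0 _).1 (hAN.hasSum_iff.2 hR0)) (k - N)
  simpa only [Nat.sub_add_cancel hk, Pi.zero_apply] using hzero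

section FiniteDimensional

variable {𝕜 E : Type*} [RCLike 𝕜] [NormedAddCommGroup E] [NormedSpace 𝕜 E] [FiniteDimensional 𝕜 E]

theorem exists_norm_sq_apply_le_sum_basis {ι : Type*} [Fintype ι] (b : Module.Basis ι 𝕜 E) :
    ∃ C, 0 ≤ C ∧ ∀ (ℓ : E →ₗ[𝕜] 𝕜) (v : E), ‖ℓ v‖ ^ 2 ≤ C * ‖v‖ ^ 2 * ∑ i, ‖ℓ (b i)‖ ^ 2 := by
  let T : E →L[𝕜] EuclideanSpace 𝕜 ι :=
    (b.equivFun.trans (WithLp.linearEquiv 2 𝕜 (ι → 𝕜)).symm).toLinearMap.toContinuousLinearMap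
  refine ⟨‖T‖ ^ 2, sq_nonneg _, fun ℓ v => ?_⟩
  have hcoord : ∑ i, ‖b.repr v i‖ ^ 2 ≤ ‖T‖ ^ 2 * ‖v‖ ^ 2 := by
    have hT : ‖T v‖ ^ 2 = ∑ i, ‖b.repr v i‖ ^ 2 := EuclideanSpace.norm_sq_eq _
    rw [← hT, ← mul_pow]
    gcongr
    exact T.le_opNorm v
  calc ‖ℓ v‖ ^ 2 = ‖∑ i, b.repr v i * ℓ (b i)‖ ^ 2 := by
        conv_lhs => rw [← b.sum_repr v]
        simp only [map_sum, map_smul, smul_eq_mul]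
    _ ≤ (∑ i, ‖b.repr v i‖ * ‖ℓ (b i)‖) ^ 2 := by
        gcongr
        exact (norm_sum_le _ _).trans_eq (Finset.sum_congr rfl fun i _ => norm_mul _ _)
    _ ≤ (∑ i, ‖b.repr v i‖ ^ 2) * ∑ i, ‖ℓ (b i)‖ ^ 2 := Finset.sum_mul_sq_le_sq_mul_sq _ _ _
    _ ≤ ‖T‖ ^ 2 * ‖v‖ ^ 2 * ∑ i, ‖ℓ (b i)‖ ^ 2 := by gcongr

theorem exists_finset_norm_sq_apply_le {ι : Type*} (G : ι → E) :
    ∃ (S : Finset ι) (C : ℝ), 0 ≤ C ∧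
      ∀ (ℓ : E →ₗ[𝕜] 𝕜) (i : ι), ‖ℓ (G i)‖ ^ 2 ≤ C * ‖G i‖ ^ 2 * ∑ j ∈ S, ‖ℓ (G j)‖ ^ 2 := by
  obtain ⟨κ, a, ha, hspan, hli⟩ := exists_linearIndependent' 𝕜 G
  have : Finite κ := hli.finite
  have : Fintype κ := Fintype.ofFinite κ
  obtain ⟨C, hC, hbasis⟩ := exists_norm_sq_apply_le_sum_basis (Module.Basis.span hli)
  refine ⟨Finset.univ.map ⟨a, ha⟩, C, hC, fun ℓ i => ?_⟩
  have hi : G i ∈ Submodule.span 𝕜 (Set.range (G ∘ a)) :=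
    hspan ▸ Submodule.subset_span (Set.mem_range_self i)
  simpa [Module.Basis.span_apply] using hbasis (ℓ.domRestrict _) ⟨G i, hi⟩

end FiniteDimensional

/-- A strictly increasing sequence which is Hadamard lacunary with ratio at least `c > 1`; the
counterpart of `HadLac` for an enumeration of the set, as the proof works with the indices. -/
structure HadamardLacunary (c : ℝ) (n : ℕ → ℕ) : Prop where
  one_lt : 1 < c
  strictMono : StrictMono n
  mul_le_succ (k : ℕ) : c * n k ≤ n (k + 1)

namespace HadamardLacunary

variable {c : ℝ} {n : ℕ → ℕ}

theorem mul_le_of_lt (hn : HadamardLacunary c n) {i j : ℕ} (hij : i < j) : c * n i ≤ n j :=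
  (hn.mul_le_succ i).trans (mod_cast hn.strictMono.monotone hij)

theorem pow_mul_le (hn : HadamardLacunary c n) (j s : ℕ) : c ^ s * n j ≤ n (j + s) := by
  have hc : 0 ≤ c := zero_le_one.trans hn.one_lt.le
  induction s with
  | zero => simp
  | succ s ih =>
    calc c ^ (s + 1) * n j = c * (c ^ s * n j) := by ring
      _ ≤ c * n (j + s) := by gcongr
      _ ≤ n (j + (s + 1)) := hn.mul_le_succ _

theorem eventually_add_lt (hn : HadamardLacunary c n) (B : ℕ) :
    ∀ᶠ k in atTop, ∀ j < k, n j + B < n k := by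
  have hc : 0 < c - 1 := sub_pos.2 hn.one_lt
  have hlim : Tendsto (fun k => (n k : ℝ) * (c - 1)) atTop atTop :=
    (tendsto_natCast_atTop_atTop.comp hn.strictMono.tendsto_atTop).atTop_mul_const hc
  have hstep : ∀ᶠ k in atTop, n k + B < n (k + 1) := by
    filter_upwards [hlim.eventually_gt_atTop (B : ℝ)] with k hk
    have : (n k + B : ℝ) < n (k + 1) := by linarith [hn.mul_le_succ k]
    exact_mod_cast this
  obtain ⟨K, hK⟩ := eventually_atTop.1 hstep
  filter_upwards [eventually_gt_atTop K] with k hk j hj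
  obtain ⟨k, rfl⟩ := Nat.exists_eq_add_one_of_ne_zero (Nat.ne_zero_of_lt hk)
  have hjk : n j ≤ n k := hn.strictMono.monotone (Nat.lt_succ_iff.1 hj)
  have := hK k (Nat.lt_succ_iff.1 hk)
  omega

theorem exists_lt_add_of_sub_eq_sub (hn : HadamardLacunary c n) :
    ∃ M, ∀ i j i' j', i < j → i' < j' → n j - n i = n j' - n i' → j < j' + M := by
  have hc := hn.one_lt
  obtain ⟨M, hM⟩ := pow_unbounded_of_one_lt (c / (c - 1)) hc
  rw [div_lt_iff₀ (sub_pos.2 hc)] at hM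
  refine ⟨M, fun i j i' j' hij hij' heq => ?_⟩
  by_contra! hj
  have hpos : 0 < (n j' : ℝ) := mod_cast (Nat.zero_le _).trans_lt (hn.strictMono hij')
  have hle : (n j : ℝ) ≤ n i + n j' := by
    have := hn.strictMono hij
    exact_mod_cast (by omega : n j ≤ n i + n j')
  have hgrow : c ^ M * n j' ≤ n j :=
    (hn.pow_mul_le j' M).trans (mod_cast hn.strictMono.monotone hj)
  have : c * n j' < c * n j' :=
    calc c * n j' < c ^ M * (c - 1) * n j' := by gcongr
      _ = (c - 1) * (c ^ M * n j') := by ring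
      _ ≤ (c - 1) * n j := by gcongr
      _ = c * n j - n j := by ring
      _ ≤ c * (n i + n j') - c * n i := by gcongr; exact hn.mul_le_of_lt hij
      _ = c * n j' := by ring
  exact this.false

theorem exists_encard_gap_fiber_le (hn : HadamardLacunary c n) :
    ∃ M : ℕ, ∀ p, ((fun x : ℕ × ℕ => n (x.1 + (x.2 + 1)) - n x.1) ⁻¹' {p}).encard ≤ M := by
  obtain ⟨M, hM⟩ := hn.exists_lt_add_of_sub_eq_sub
  refine ⟨M, fun p => ?_⟩
  set F := (fun x : ℕ × ℕ => n (x.1 + (x.2 + 1)) - n x.1) ⁻¹' {p}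
  let top : ℕ × ℕ → ℕ := fun x => x.1 + (x.2 + 1)
  have hlt (x : ℕ × ℕ) : x.1 < top x := by simp only [top]; omega
  have hgap {x y : ℕ × ℕ} (hx : x ∈ F) (hy : y ∈ F) : n (top x) - n x.1 = n (top y) - n y.1 :=
    hx.trans hy.symm
  have hinj : Set.InjOn top F := by
    intro x hx y hy hxy
    have hval : n x.1 = n y.1 := by
      have hgap := hgap hx hy
      have hx' := hn.strictMono (hlt x)
      have hy' := hn.strictMono (hlt y)
      rw [← hxy] at hgap hy'
      omega
    have hfst := hn.strictMono.injective hval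
    exact Prod.ext hfst (by simp only [top] at hxy; omega)
  obtain hF | hF := F.eq_empty_or_nonempty
  · simp [hF]
  let x₀ := Function.argminOn top F hF
  have hx₀ : x₀ ∈ F := Function.argminOn_mem top F hF
  have himage : top '' F ⊆ Finset.Ico (top x₀) (top x₀ + M) := by
    rintro _ ⟨x, hx, rfl⟩
    exact Finset.mem_coe.2 (Finset.mem_Ico.2 ⟨Function.argminOn_le top F hx,
      hM _ _ _ _ (hlt x) (hlt x₀) (hgap hx hx₀)⟩)
  calc F.encard = (top '' F).encard := hinj.encard_image.symm
    _ ≤ (Finset.Ico (top x₀) (top x₀ + M) : Set ℕ).encard := Set.encard_le_encard himage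
    _ = M := by rw [Set.encard_coe_eq_coe_finsetCard, Nat.card_Ico, Nat.add_sub_cancel_left]

theorem summable_comp_gap (hn : HadamardLacunary c n) {f : ℕ → ℝ} (hf : Summable f)
    (hf0 : ∀ p, 0 ≤ f p) : Summable fun x : ℕ × ℕ => f (n (x.1 + (x.2 + 1)) - n x.1) := by
  obtain ⟨M, hM⟩ := hn.exists_encard_gap_fiber_le
  exact summable_comp_of_encard_fiber_le hf hf0 hM

theorem eventually_inner_eq_zero {𝕜 E : Type*} [RCLike 𝕜] [NormedAddCommGroup E]
    [InnerProductSpace 𝕜 E] [FiniteDimensional 𝕜 E] (hn : HadamardLacunary c n) {Φ G : ℕ → E}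
    (hΦ : Summable fun k => ‖Φ k‖ ^ 2) (hG : Summable fun p => ‖G p‖ ^ 2)
    (horth : ∀ m, ∀ᶠ k in atTop,
      HasSum (fun s => ⟪Φ (k + s), G (n (k + s) - n k + m)⟫_𝕜) 0) :
    ∀ᶠ k in atTop, ∀ m, ⟪Φ k, G m⟫_𝕜 = 0 := by
  obtain ⟨S, C, hC, hS⟩ := exists_finset_norm_sq_apply_le (𝕜 := 𝕜) G
  replace hS (k m : ℕ) : ‖⟪Φ k, G m⟫_𝕜‖ ^ 2 ≤ C * ‖G m‖ ^ 2 * ∑ l ∈ S, ‖⟪Φ k, G l⟫_𝕜‖ ^ 2 :=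
    hS (innerₛₗ 𝕜 (Φ k)) m
  let A : ℕ → ℝ := fun k => ∑ l ∈ S, ‖⟪Φ k, G l⟫_𝕜‖ ^ 2
  let γ : ℕ → ℕ × ℕ → ℝ := fun m x => C * ‖G (n (x.1 + (x.2 + 1)) - n x.1 + m)‖ ^ 2
  have hA0 (k : ℕ) : 0 ≤ A k := Finset.sum_nonneg fun l _ => sq_nonneg _
  have hγ0 (m : ℕ) (x : ℕ × ℕ) : 0 ≤ γ m x := by positivity
  have hA : Summable A := summable_sum fun l _ =>
    .of_nonneg_of_le (fun k => sq_nonneg _)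
      (fun k => by rw [← mul_pow]; gcongr; exact norm_inner_le_norm _ _) (hΦ.mul_right (‖G l‖ ^ 2))
  have hγ (m : ℕ) : Summable (γ m) :=
    (hn.summable_comp_gap ((summable_nat_add_iff m).2 hG) fun p => sq_nonneg _).mul_left C
  have hAtail (k : ℕ) : Summable fun s => A (k + (s + 1)) :=
    hA.comp_injective ((add_right_injective k).comp (add_left_injective 1))
  have hterm (k m : ℕ) (h : HasSum (fun s => ⟪Φ (k + s), G (n (k + s) - n k + m)⟫_𝕜) 0) :
      ‖⟪Φ k, G m⟫_𝕜‖ ^ 2 ≤ (∑' s, A (k + (s + 1))) * ∑' s, γ m (k, s) := by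
    simpa using norm_sq_zero_le_tsum_mul_tsum_of_hasSum_zero h (hAtail k) ((hγ m).prod_factor k)
      (fun s => hA0 _) (fun s => hγ0 m _) fun s => (hS _ _).trans_eq (mul_comm _ _)
  have hrec : ∀ᶠ k in atTop, A k ≤ (∑' s, A (k + (s + 1))) * ∑ l ∈ S, ∑' s, γ l (k, s) := by
    filter_upwards [(eventually_all_finset S).2 fun l _ => horth l] with k hk
    rw [Finset.mul_sum]
    exact Finset.sum_le_sum fun l hl => hterm k l (hk l hl)
  have hδ : Summable fun k => ∑ l ∈ S, ∑' s, γ l (k, s) := summable_sum fun l _ => (hγ l).prod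
  filter_upwards [eventually_eq_zero_of_le_tail_mul hA hA0 hδ
    (fun k => Finset.sum_nonneg fun l _ => tsum_nonneg fun s => hγ0 l _) hrec] with k hk m
  have hle : ‖⟪Φ k, G m⟫_𝕜‖ ^ 2 ≤ C * ‖G m‖ ^ 2 * A k := hS k m
  rw [hk, mul_zero] at hle
  exact norm_eq_zero.1 (pow_eq_zero_iff two_ne_zero |>.1 (hle.antisymm (sq_nonneg _)))

end HadamardLacunary

theorem mem_orthogonal_span_iff {𝕜 E : Type*} [RCLike 𝕜] [NormedAddCommGroup E]
    [InnerProductSpace 𝕜 E] {s : Set E} {v : E} :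
    v ∈ (Submodule.span 𝕜 s)ᗮ ↔ ∀ u ∈ s, ⟪u, v⟫_𝕜 = 0 := by
  rw [← Submodule.span_singleton_le_iff_mem, ← Submodule.IsOrtho, Submodule.isOrtho_comm,
    Submodule.isOrtho_span]
  simp only [Set.mem_singleton_iff, forall_eq]

theorem summable_norm_sq_coeff (f : H2 X) : Summable fun k => ‖f k‖ ^ 2 := by
  simpa using (lp.memℓp f).summable (by norm_num)

theorem bshift_iterate_apply (q : ℕ) (f : H2 X) (t : ℕ) : (bshift^[q] f) t = f (t + q) := by
  induction q generalizing f with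
  | zero => rfl
  | succ _ ih => exact ih (bshift f)

theorem bshift_iterate_sum {ι : Type*} (q : ℕ) (s : Finset ι) (φ : ι → H2 X) :
    bshift^[q] (∑ i ∈ s, φ i) = ∑ i ∈ s, bshift^[q] (φ i) := by
  ext t : 2
  simp only [bshift_iterate_apply, lp.coeFn_sum, Finset.sum_apply]

theorem Ef_eq_top_iff [CompleteSpace X] {f : H2 X} :
    Ef f = ⊤ ↔ ∀ g : H2 X, (∀ q, ⟪bshift^[q] f, g⟫_ℂ = 0) → g = 0 := by
  simp only [Ef, EF, Submodule.topologicalClosure_eq_top_iff, Submodule.eq_bot_iff,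
    mem_orthogonal_span_iff, Set.mem_singleton_iff, exists_eq_left, Set.mem_ofPred_eq,
    forall_exists_index, forall_eq_apply_imp_iff]

theorem hasSum_inner_bshift_iterate {n : ℕ → ℕ} (hn : StrictMono n) {b k q : ℕ} {f : H2 X}
    (hf : spec f ⊆ {t | ∃ j, t = n j + b}) (hq : q ≤ n k) (hlt : ∀ j < k, n j + b < q) (g : H2 X) :
    HasSum (fun s => ⟪f (n (k + s) + b), g (n (k + s) - q + b)⟫_ℂ) ⟪bshift^[q] f, g⟫_ℂ := by
  have hle (s : ℕ) : q ≤ n (k + s) := hq.trans (hn.monotone (Nat.le_add_right k s))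
  have hinj : Function.Injective fun s => n (k + s) - q + b := by
    intro s s' h
    have hval : n (k + s) = n (k + s') := by
      have := hle s
      have := hle s'
      simp only at h
      omega
    exact Nat.add_left_cancel (hn.injective hval)
  have hsupp : ∀ t ∉ Set.range (fun s => n (k + s) - q + b), ⟪(bshift^[q] f) t, g t⟫_ℂ = 0 := by
    intro t ht
    suffices f (t + q) = 0 by rw [bshift_iterate_apply, this, inner_zero_left]
    by_contra hne
    obtain ⟨j, hj⟩ := hf hne
    have hkj : k ≤ j := by
      by_contra! hjk
      have := hlt j hjk
      omega
    refine ht ⟨j - k, ?_⟩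
    have := hq.trans (hn.monotone hkj)
    simp only [Nat.add_sub_cancel' hkj]
    omega
  refine ((hinj.hasSum_iff hsupp).2 (lp.hasSum_inner (bshift^[q] f) g)).congr_fun fun s => ?_
  simp only [Function.comp_apply, bshift_iterate_apply]
  rw [show n (k + s) - q + b + q = n (k + s) + b by have := hle s; omega]

section ShiftedCoeffs

variable {ι : Type*} [Fintype ι]

/-- The block `(f̂ᵢ(m + bᵢ))ᵢ` of Taylor coefficients of a family `fᵢ ∈ H²(𝔻, X)`. At `m = n k` it
is the vector of the spanning condition; for a constant family `g` it is a window of coefficients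
of `g`. Its `ℓ²` norm makes pairings of blocks inner products. -/
def shiftedCoeffs (b : ι → ℕ) (f : ι → H2 X) (m : ℕ) : PiLp 2 fun _ : ι => X :=
  WithLp.toLp 2 fun i => f i (m + b i)

theorem summable_norm_sq_shiftedCoeffs (b : ι → ℕ) (f : ι → H2 X) :
    Summable fun m => ‖shiftedCoeffs b f m‖ ^ 2 := by
  simp only [shiftedCoeffs, PiLp.norm_sq_eq_of_L2]
  exact summable_sum fun i _ => (summable_nat_add_iff (b i)).2 (summable_norm_sq_coeff (f i))

theorem hasSum_inner_shiftedCoeffs {n : ℕ → ℕ} (hn : StrictMono n) {b : ι → ℕ} {k q : ℕ}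
    {φ : ι → H2 X} (hφ : ∀ i, spec (φ i) ⊆ {t | ∃ j, t = n j + b i}) (hq : q ≤ n k)
    (hlt : ∀ i, ∀ j < k, n j + b i < q) (g : H2 X) :
    HasSum (fun s => ⟪shiftedCoeffs b φ (n (k + s)),
      shiftedCoeffs b (fun _ => g) (n (k + s) - q)⟫_ℂ) ⟪bshift^[q] (∑ i, φ i), g⟫_ℂ := by
  rw [bshift_iterate_sum, sum_inner]
  exact hasSum_sum fun i _ => hasSum_inner_bshift_iterate hn (hφ i) hq (hlt i) g

theorem HadamardLacunary.eventually_hasSum_inner_shiftedCoeffs {c : ℝ} {n : ℕ → ℕ}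
    (hn : HadamardLacunary c n) {b : ι → ℕ} {φ : ι → H2 X}
    (hφ : ∀ i, spec (φ i) ⊆ {t | ∃ j, t = n j + b i}) {g : H2 X}
    (hg : ∀ q, ⟪bshift^[q] (∑ i, φ i), g⟫_ℂ = 0) (m : ℕ) :
    ∀ᶠ k in atTop, HasSum (fun s => ⟪shiftedCoeffs b φ (n (k + s)),
      shiftedCoeffs b (fun _ => g) (n (k + s) - n k + m)⟫_ℂ) 0 := by
  filter_upwards [hn.strictMono.tendsto_atTop.eventually_ge_atTop m,
    eventually_all.2 fun i => hn.eventually_add_lt (b i + m)] with k hm hgap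
  have hsub (s : ℕ) : n (k + s) - n k + m = n (k + s) - (n k - m) := by
    have := hn.strictMono.monotone (Nat.le_add_right k s)
    omega
  simp only [hsub]
  rw [← hg (n k - m)]
  refine hasSum_inner_shiftedCoeffs hn.strictMono hφ (Nat.sub_le _ _) (fun i j hj => ?_) g
  have := hgap i j hj
  omega

end ShiftedCoeffs

theorem sum_shifted_lacunary_cyclic_general {ι : Type*} [Fintype ι] [FiniteDimensional ℂ X]
    {c : ℝ} {n : ℕ → ℕ} (hn : HadamardLacunary c n) {b : ι → ℕ} {i₀ : ι} (hb : b i₀ = 0)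
    (φ : ι → H2 X) (hφ : ∀ i, spec (φ i) ⊆ {t | ∃ k, t = n k + b i})
    (hspan : ∀ m, Submodule.span ℂ {w : PiLp 2 fun _ : ι => X |
      ∃ k ≥ m, w = fun i => φ i (n k + b i)} = ⊤) :
    Ef (∑ i, φ i) = ⊤ := by
  have : CompleteSpace X := FiniteDimensional.complete ℂ X
  refine Ef_eq_top_iff.2 fun g hg => ?_
  obtain ⟨N, hN⟩ := eventually_atTop.1 <| hn.eventually_inner_eq_zero
    ((summable_norm_sq_shiftedCoeffs b φ).comp_injective hn.strictMono.injective)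
    (summable_norm_sq_shiftedCoeffs b fun _ => g)
    (hn.eventually_hasSum_inner_shiftedCoeffs hφ hg)
  have hzero (t : ℕ) : shiftedCoeffs b (fun _ => g) t = 0 := by
    have hmem : shiftedCoeffs b (fun _ => g) t ∈ (Submodule.span ℂ {w : PiLp 2 fun _ : ι => X |
        ∃ k ≥ N, w = fun i => φ i (n k + b i)})ᗮ := by
      refine mem_orthogonal_span_iff.2 ?_
      rintro w ⟨k, hk, hw⟩
      have hw' : w = shiftedCoeffs b φ (n k) := WithLp.ofLp_injective 2 hw
      exact hw' ▸ hN k hk t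
    rwa [hspan N, Submodule.top_orthogonal_eq_bot, Submodule.mem_bot] at hmem
  ext t : 2
  simpa [shiftedCoeffs, hb] using congrArg (fun v : PiLp 2 fun _ : ι => X => v i₀) (hzero t)

/-- Sufficient condition for cyclicity of `φ = ∑ᵢ φᵢ` where `σ(φᵢ) ⊆ {nₖ + i − 1}`:
if for every `m` the span of the vectors `(φ̂₁(nₖ), …, φ̂_r(nₖ+r−1))`, `k ≥ m`,
is all of `(ℂ^d)^r`, then `φ` is cyclic. -/
theorem sum_shifted_lacunary_cyclic
    (r d : ℕ) (hr : 1 ≤ r) (hd : 1 ≤ d)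
    (n : ℕ → ℕ) (c : ℝ) (hc : 1 < c) (hmono : StrictMono n)
    (hlac : ∀ k, c * n k ≤ n (k + 1))
    (φ : Fin r → H2 (EuclideanSpace ℂ (Fin d)))
    (hspec : ∀ i : Fin r, spec (φ i) ⊆ {t : ℕ | ∃ k : ℕ, t = n k + (i : ℕ)})
    (hspan : ∀ m : ℕ,
      Submodule.span ℂ {w : PiLp 2 fun _ : Fin r => EuclideanSpace ℂ (Fin d) |
        ∃ k ≥ m, w = fun i : Fin r => (φ i) (n k + (i : ℕ))} = ⊤) :
    Ef (∑ i : Fin r, φ i) = ⊤ := by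
  exact sum_shifted_lacunary_cyclic_general ⟨hc, hmono, hlac⟩ (i₀ := ⟨0, hr⟩) rfl φ hspec hspan

end
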